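/- Let A be an artin algebra with Jacobson radical J and Loewy length m ≥ 2, and let B = End_A(⊕_{j=1}^m A/J^j) be the ADR algebra of A. Then the global dimension of B equals 2 if and only if J ∈ add(⊕_{j=1}^m A/J^j), i.e. the radical of A is a direct summand of a finite direct sum of copies of the modules A/J^j. -/

import Mathlib

/-- The Jacobson radical of a ring `A`. -/
def jacobsonRad (A : Type) [Ring A] : Ideal A := Ideal.jacobson ⊥

/-- The submodule `I • N` (span of products), valid over noncommutative rings. -/
def smulSub {A : Type} [Ring A] (I : Ideal A) {M : Type} [AddCommGroup M] [Module A M]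
    (N : Submodule A M) : Submodule A M :=
  Submodule.span A {x | ∃ a ∈ I, ∃ y ∈ N, x = a • y}

/-- `radPow A M n` is the submodule `M J(A)^n` (written for left modules: `J(A)^n M`). -/
def radPow (A : Type) [Ring A] (M : Type) [AddCommGroup M] [Module A M] : ℕ → Submodule A M
  | 0 => ⊤
  | n + 1 => smulSub (jacobsonRad A) (radPow A M n)

lemma radPow_succ_le (A : Type) [Ring A] (M : Type) [AddCommGroup M] [Module A M] (n : ℕ) :
    radPow A M (n + 1) ≤ radPow A M n := by
  show smulSub (jacobsonRad A) (radPow A M n) ≤ radPow A M n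
  rw [smulSub, Submodule.span_le]
  rintro x ⟨a, _, y, hy, rfl⟩
  exact Submodule.smul_mem _ a hy

lemma radPow_le_one (A : Type) [Ring A] (M : Type) [AddCommGroup M] [Module A M]
    {j : ℕ} (hj : 1 ≤ j) : radPow A M j ≤ radPow A M 1 := by
  induction j with
  | zero => omega
  | succ n ih =>
    rcases Nat.lt_or_ge 1 (n+1) with h | h
    · exact le_trans (radPow_succ_le A M n) (ih (by omega))
    · have : n + 1 = 1 := by omega
      rw [this]

/-- `X` belongs to `add M`: it is a direct summand of a finite direct sum of copies of `M`. -/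
def InAdd (A : Type) [Ring A] (M : Type) [AddCommGroup M] [Module A M]
    (X : Type) [AddCommGroup X] [Module A X] : Prop :=
  ∃ (n : ℕ) (Y : Type) (_ : AddCommGroup Y) (_ : Module A Y),
    Nonempty ((X × Y) ≃ₗ[A] (Fin n → M))

/-- `f` lies in the Jacobson radical of the category of `A`-modules. -/
def IsRadMor (A : Type) [Ring A] {M N : Type} [AddCommGroup M] [Module A M]
    [AddCommGroup N] [Module A N] (f : M →ₗ[A] N) : Prop :=
  ∀ g : N →ₗ[A] M, IsUnit ((1 : Module.End A M) - (g ∘ₗ f : Module.End A M))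

/-- The ADR module `⊕_{j=1}^m A/J^j`. -/
abbrev ADRModule (A : Type) [Ring A] (m : ℕ) : Type :=
  ∀ j : Fin m, A ⧸ radPow A A (j.1 + 1)

/-- Global dimension at most one: every submodule of a projective module is projective. -/
def GlDimLE1 (B : Type) [Ring B] : Prop :=
  ∀ (P : Type) [AddCommGroup P] [Module B P], Module.Projective B P →
    ∀ N : Submodule B P, Module.Projective B ↥N

/-- Global dimension at most two: the kernel of any morphism between projective modules
is projective. -/
def GlDimLE2 (B : Type) [Ring B] : Prop :=
  ∀ (P Q : Type) [AddCommGroup P] [Module B P] [AddCommGroup Q] [Module B Q],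
    Module.Projective B P → Module.Projective B Q →
      ∀ f : P →ₗ[B] Q, Module.Projective B ↥(LinearMap.ker f)

/-!
Write `M` for the ADR module, `B = End_A(M)`, and use the functor `Hom_A(-, M)`, which sends
`add M` to projective `B`-modules.

If `J ∈ add M`, then the subcategories `add (A/J ⊕ ⋯ ⊕ A/J^l)` are closed under submodules, by
induction on `l`: a submodule `N` of a power of the `(l+1)`-st sum is a direct summand of
`(A/J^{l+1})^n ⊕ N'`, where `N'` consists of the elements of `N` whose components in `A/J^{l+1}`
are radical. Since `J/J^{l+1}` lies in the `l`-th subcategory, the induction hypothesis applies to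
`N'`. Now let `g : Hom(M^k, M) → Q` be a map to a projective module. A map `M^k → M` lies in
`ker g` as soon as it vanishes on the common kernel `D` of the elements of `ker g`, so that
`ker g = Hom(M^k/D, M)`; as `M^k/D` embeds in a power of `M`, it lies in `add M` and `ker g` is
projective. Over the semiprimary ring `B` this passes from free modules of finite rank to all
projective modules. The global dimension is not at most one, because that would split the
projection `A → A/J^{m-1}`.

Conversely, a finite presentation of `J` exhibits `Hom(J, M)` as the kernel of a map between
projective modules, so it is projective if the global dimension is at most two. Composing the
coordinate functionals of a dual basis with the restriction `Hom(A, M) → Hom(J, M)` gives maps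
`M → A`; these take values in `J` because `A/J` is cogenerated by `M`, and together with the dual
basis they exhibit `J` as a direct summand of a power of `M`.
-/

section AddClosure

variable {A : Type} [Ring A] {L M X Y : Type} [AddCommGroup L] [Module A L]
  [AddCommGroup M] [Module A M] [AddCommGroup X] [Module A X] [AddCommGroup Y] [Module A Y]

lemma inAdd_of_retract_pow {κ : Type} [Finite κ] (s : X →ₗ[A] κ → M) (t : (κ → M) →ₗ[A] X)
    (hts : t ∘ₗ s = LinearMap.id) : InAdd A M X := by
  obtain ⟨n, ⟨e⟩⟩ := Finite.exists_equiv_fin κ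
  have hexact : Function.Exact (LinearMap.ker t).subtype t := t.exact_subtype_ker_map
  let split := (hexact.splitSurjectiveEquiv (LinearMap.ker t).injective_subtype ⟨s, hts⟩).1
  exact ⟨n, LinearMap.ker t, inferInstance, inferInstance,
    ⟨LinearEquiv.prodComm A X (LinearMap.ker t) ≪≫ₗ split.symm ≪≫ₗ
      LinearEquiv.funCongrLeft A M e.symm⟩⟩

lemma InAdd.exists_retract_pow (h : InAdd A M X) :
    ∃ (n : ℕ) (s : X →ₗ[A] Fin n → M) (t : (Fin n → M) →ₗ[A] X), t ∘ₗ s = LinearMap.id := by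
  obtain ⟨n, Z, _, _, ⟨e⟩⟩ := h
  exact ⟨n, e ∘ₗ LinearMap.inl A X Z, LinearMap.fst A X Z ∘ₗ e.symm, by ext; simp⟩

lemma InAdd.of_retract (hX : InAdd A M X) (s : Y →ₗ[A] X) (t : X →ₗ[A] Y)
    (hts : t ∘ₗ s = LinearMap.id) : InAdd A M Y := by
  obtain ⟨n, s', t', h'⟩ := hX.exists_retract_pow
  refine inAdd_of_retract_pow (s' ∘ₗ s) (t ∘ₗ t') ?_
  rw [LinearMap.comp_assoc, ← LinearMap.comp_assoc s, h', LinearMap.id_comp, hts]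

lemma InAdd.of_equiv (hX : InAdd A M X) (e : X ≃ₗ[A] Y) : InAdd A M Y :=
  hX.of_retract e.symm e (by ext; simp)

lemma InAdd.self : InAdd A M M :=
  inAdd_of_retract_pow (LinearMap.pi fun _ : Unit => LinearMap.id) (LinearMap.proj ()) rfl

lemma InAdd.of_subsingleton [Subsingleton X] : InAdd A M X :=
  inAdd_of_retract_pow (κ := Empty) 0 0 (Subsingleton.elim _ _)

lemma InAdd.pi {ι : Type} [Finite ι] {Z : ι → Type} [∀ i, AddCommGroup (Z i)]
    [∀ i, Module A (Z i)] (h : ∀ i, InAdd A M (Z i)) : InAdd A M (∀ i, Z i) := by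
  choose n s t hts using fun i => (h i).exists_retract_pow
  let e := LinearEquiv.piCurry A fun (i : ι) (_ : Fin (n i)) => M
  refine inAdd_of_retract_pow (e.symm ∘ₗ LinearMap.piMap s) (LinearMap.piMap t ∘ₗ e.toLinearMap) ?_
  ext x i
  simpa using LinearMap.congr_fun (hts i) (x i)

lemma inAdd_pi_component {ι : Type} (Z : ι → Type) [∀ i, AddCommGroup (Z i)]
    [∀ i, Module A (Z i)] (i : ι) : InAdd A (∀ i, Z i) (Z i) := by
  classical
  exact InAdd.self.of_retract (LinearMap.single A Z i) (LinearMap.proj i)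
    (LinearMap.proj_comp_single_same A Z i)

lemma InAdd.prod (hX : InAdd A M X) (hY : InAdd A M Y) : InAdd A M (X × Y) := by
  obtain ⟨n, s, t, hts⟩ := hX.exists_retract_pow
  obtain ⟨k, s', t', hts'⟩ := hY.exists_retract_pow
  let e := LinearEquiv.sumArrowLequivProdArrow (Fin n) (Fin k) A M
  refine inAdd_of_retract_pow (e.symm ∘ₗ s.prodMap s') (t.prodMap t' ∘ₗ e.toLinearMap) ?_
  rw [LinearMap.comp_assoc, ← LinearMap.comp_assoc _ e.symm.toLinearMap, e.comp_symm,
    LinearMap.id_comp, LinearMap.prodMap_comp, hts, hts', LinearMap.prodMap_id]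

lemma InAdd.trans (hX : InAdd A M X) (hM : InAdd A L M) : InAdd A L X := by
  obtain ⟨n, s, t, hts⟩ := hX.exists_retract_pow
  exact (InAdd.pi fun _ : Fin n => hM).of_retract s t hts

/-- The subcategory `add M` is closed under submodules; these are encoded as injective maps. -/
def AddClosedUnderSubmodules (A : Type) [Ring A] (M : Type) [AddCommGroup M] [Module A M] : Prop :=
  ∀ ⦃N X : Type⦄ [AddCommGroup N] [Module A N] [AddCommGroup X] [Module A X] (f : N →ₗ[A] X),
    Function.Injective f → InAdd A M X → InAdd A M N

end AddClosure

section RadicalPowers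

variable {A : Type} [Ring A] {X : Type} [AddCommGroup X] [Module A X]

lemma jacobsonRad_eq_jacobson : jacobsonRad A = Ring.jacobson A := Ideal.jacobson_bot

lemma smulSub_eq_smul (I : Ideal A) (N : Submodule A X) : smulSub I N = I • N := by
  refine le_antisymm (Submodule.span_le.2 ?_) (Submodule.smul_le.2 fun a ha x hx =>
    Submodule.subset_span ⟨a, ha, x, hx, rfl⟩)
  rintro _ ⟨a, ha, x, hx, rfl⟩
  exact Submodule.smul_mem_smul ha hx

lemma radPow_eq_pow (n : ℕ) : radPow A A n = Ring.jacobson A ^ n := by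
  induction n with
  | zero => rw [radPow, Submodule.pow_zero, Ideal.one_eq_top]
  | succ n ih =>
    rw [radPow, ih, smulSub_eq_smul, jacobsonRad_eq_jacobson, Ideal.smul_eq_mul,
      Ideal.IsTwoSided.pow_succ]

lemma radPow_one : radPow A A 1 = jacobsonRad A := by
  rw [radPow_eq_pow, Submodule.pow_one, jacobsonRad_eq_jacobson]

lemma radPow_antitone : Antitone (radPow A A) := antitone_nat_of_succ_le (radPow_succ_le A A)

lemma radPow_smul_top (n : ℕ) : radPow A A n • (⊤ : Ideal A) = radPow A A n := by
  rw [radPow_eq_pow, Ideal.smul_eq_mul, Ideal.mul_top]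

lemma radPow_smul_top_quotient (l : ℕ) (I : Ideal A) :
    radPow A A l • (⊤ : Submodule A (A ⧸ I)) = (radPow A A l).map I.mkQ := by
  rw [← Submodule.range_mkQ, ← Submodule.map_top, ← Submodule.map_smul'', radPow_smul_top]

end RadicalPowers

section Truncation

variable {A : Type} [Ring A] {M X Y : Type} [AddCommGroup M] [Module A M] [AddCommGroup X]
  [Module A X] [AddCommGroup Y] [Module A Y]

lemma inAdd_pi_quotient_smul_top {ι : Type} [Finite ι] {Z : ι → Type} [∀ i, AddCommGroup (Z i)]
    [∀ i, Module A (Z i)] {I : Ideal A}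
    (hZ : ∀ i, InAdd A M (Z i ⧸ I • (⊤ : Submodule A (Z i)))) :
    InAdd A M ((∀ i, Z i) ⧸ I • (⊤ : Submodule A (∀ i, Z i))) := by
  have := Fintype.ofFinite ι
  classical
  refine (InAdd.pi hZ).of_retract
    (LinearMap.pi fun i => Submodule.mapQ _ _ (LinearMap.proj i)
      (Submodule.smul_top_le_comap_smul_top I _))
    (LinearMap.lsum A _ ℕ fun i => Submodule.mapQ _ _ (LinearMap.single A Z i)
      (Submodule.smul_top_le_comap_smul_top I _)) ?_
  refine Submodule.linearMap_qext _ (LinearMap.ext fun z => ?_)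
  simp only [LinearMap.comp_apply, LinearMap.lsum_apply, LinearMap.coe_sum, Finset.sum_apply,
    LinearMap.pi_apply, LinearMap.coe_proj, Function.eval, Submodule.mkQ_apply,
    Submodule.mapQ_apply, LinearMap.id_apply, LinearMap.coe_single]
  simp only [← Submodule.mkQ_apply, ← map_sum, Finset.univ_sum_single]

lemma InAdd.quotient_smul_top {I : Ideal A} (hX : InAdd A Y X)
    (hY : InAdd A M (Y ⧸ I • (⊤ : Submodule A Y))) :
    InAdd A M (X ⧸ I • (⊤ : Submodule A X)) := by
  obtain ⟨n, s, t, hts⟩ := hX.exists_retract_pow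
  refine (inAdd_pi_quotient_smul_top fun _ : Fin n => hY).of_retract
    (Submodule.mapQ _ _ s (Submodule.smul_top_le_comap_smul_top I s))
    (Submodule.mapQ _ _ t (Submodule.smul_top_le_comap_smul_top I t)) ?_
  ext x
  simp [← LinearMap.comp_apply t, hts]

lemma inAdd_ADRModule_quotient {j l : ℕ} (h : j ≤ l) :
    InAdd A (ADRModule A l) (A ⧸ radPow A A j) := by
  obtain _ | j := j
  · have : Subsingleton (A ⧸ radPow A A 0) := Submodule.Quotient.subsingleton_iff.2 rfl
    exact .of_subsingleton
  · exact inAdd_pi_component (fun i : Fin l => A ⧸ radPow A A (i.1 + 1)) ⟨j, h⟩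

lemma InAdd.ADRModule_quotient_radPow_smul {k : ℕ} (hX : InAdd A (ADRModule A k) X) (l : ℕ) :
    InAdd A (ADRModule A l) (X ⧸ radPow A A l • (⊤ : Submodule A X)) := by
  refine hX.quotient_smul_top (inAdd_pi_quotient_smul_top fun i => ?_)
  rw [radPow_smul_top_quotient]
  refine InAdd.of_equiv ?_ (Submodule.quotientQuotientEquivQuotientSup _ _).symm
  obtain h | h := le_total (i.1 + 1) l
  · rw [sup_eq_left.2 (radPow_antitone h)]
    exact inAdd_ADRModule_quotient h
  · rw [sup_eq_right.2 (radPow_antitone h)]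
    exact inAdd_ADRModule_quotient le_rfl

end Truncation

section Exchange

variable {A : Type} [Ring A] {F N V : Type} [AddCommGroup F] [Module A F] [AddCommGroup N]
  [Module A N] [AddCommGroup V] [Module A V]

lemma isSemisimpleModule_quotient_of_jacobson_smul_le [IsSemisimpleRing (A ⧸ Ring.jacobson A)]
    {R : Submodule A F} (hR : Ring.jacobson A • ⊤ ≤ R) : IsSemisimpleModule A (F ⧸ R) := by
  have htors : Module.IsTorsionBySet A (F ⧸ R) (Ring.jacobson A : Set A) :=
    (Module.isTorsionBySet_quotient_iff _ _).2 fun x a ha =>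
      hR (Submodule.smul_mem_smul ha trivial)
  let _ := htors.module
  exact htors.isSemisimpleModule_iff.1 inferInstance

lemma exists_comp_eq_of_range_le {ι : Type} [Finite ι] {I : Ideal A}
    (hN : ∀ a ∈ I, ∀ x : N, a • x = 0) (p : N →ₗ[A] V) (g : (ι → A ⧸ I) →ₗ[A] V)
    (hg : LinearMap.range g ≤ LinearMap.range p) : ∃ θ : (ι → A ⧸ I) →ₗ[A] N, p ∘ₗ θ = g := by
  have := Fintype.ofFinite ι
  classical
  choose x hx using fun i => hg ⟨Pi.single i (I.mkQ 1), rfl⟩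
  refine ⟨LinearMap.lsum A _ ℕ fun i => I.liftQ (LinearMap.toSpanSingleton A N (x i))
    fun a ha => hN a ha (x i), ?_⟩
  refine LinearMap.pi_ext' fun i => ?_
  ext
  simp only [LinearMap.comp_apply, LinearMap.coe_single, LinearMap.lsum_piSingle]
  exact (congrArg p (one_smul A (x i))).trans (hx i)

-- The projection of `F ⧸ R` onto the image of `N` lifts to `θ : F → N`; then `x - θ (φ x)` lies in
-- the preimage of `R`, and `x` is recovered from it and `φ x`.
lemma exists_retract_prod_comap (φ : N →ₗ[A] F) (R : Submodule A F) [IsSemisimpleModule A (F ⧸ R)]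
    (hlift : ∀ g : F →ₗ[A] F ⧸ R, LinearMap.range g ≤ LinearMap.range (R.mkQ ∘ₗ φ) →
      ∃ θ : F →ₗ[A] N, (R.mkQ ∘ₗ φ) ∘ₗ θ = g) :
    ∃ (s : N →ₗ[A] F × R.comap φ) (t : F × R.comap φ →ₗ[A] N), t ∘ₗ s = LinearMap.id := by
  set T := LinearMap.range (R.mkQ ∘ₗ φ)
  obtain ⟨C, hC⟩ := exists_isCompl T
  obtain ⟨θ, hθ⟩ := hlift (T.subtype ∘ₗ T.projectionOnto C hC ∘ₗ R.mkQ) <| by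
    rintro _ ⟨x, rfl⟩
    exact Subtype.prop _
  have mkQ_θ (x : N) : R.mkQ (φ (θ (φ x))) = R.mkQ (φ x) := by
    have hproj : T.projectionOnto C hC (R.mkQ (φ x)) = ⟨R.mkQ (φ x), x, rfl⟩ :=
      Submodule.projectionOnto_apply_left hC ⟨R.mkQ (φ x), x, rfl⟩
    exact (LinearMap.congr_fun hθ (φ x)).trans (congrArg Subtype.val hproj)
  let rest : N →ₗ[A] R.comap φ := (LinearMap.id - θ ∘ₗ φ).codRestrict _ fun x => by
    rw [Submodule.mem_comap, ← Submodule.Quotient.mk_eq_zero, ← Submodule.mkQ_apply]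
    simp only [LinearMap.sub_apply, LinearMap.id_apply, LinearMap.comp_apply, map_sub, mkQ_θ,
      sub_self]
  refine ⟨φ.prod rest, θ.coprod (R.comap φ).subtype, LinearMap.ext fun x => ?_⟩
  simp [rest]

end Exchange

section SubmoduleClosure

variable {A : Type} [Ring A]

lemma smul_quotient_radPow_eq_zero {j l : ℕ} (h : j ≤ l) {a : A} (ha : a ∈ radPow A A l)
    (x : A ⧸ radPow A A j) : a • x = 0 := by
  have hbot : (radPow A A l).map (radPow A A j).mkQ = ⊥ := by
    rw [← LinearMap.le_ker_iff_map, Submodule.ker_mkQ]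
    exact radPow_antitone h
  rw [← Submodule.mem_bot A, ← hbot, ← radPow_smul_top_quotient]
  exact Submodule.smul_mem_smul ha trivial

lemma radPow_smul_eq_zero_of_injective {κ N : Type} [AddCommGroup N] [Module A N] {l : ℕ} {a : A}
    (ha : a ∈ radPow A A l) (f : N →ₗ[A] κ → ADRModule A l) (hf : Function.Injective f) (x : N) :
    a • x = 0 := by
  refine hf (funext fun i => funext fun j => ?_)
  rw [map_smul, map_zero]
  exact smul_quotient_radPow_eq_zero j.2 ha _

lemma radPow_succ_eq_smul (l : ℕ) : radPow A A (l + 1) = radPow A A l • jacobsonRad A := by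
  rw [radPow_eq_pow, radPow_eq_pow, jacobsonRad_eq_jacobson, Submodule.pow_succ, Ideal.smul_eq_mul]

lemma exists_injective_jacobsonRad_quotient (A : Type) [Ring A] (l : ℕ) :
    ∃ ι : ↥(jacobsonRad A) ⧸ radPow A A l • (⊤ : Submodule A (jacobsonRad A)) →ₗ[A]
      A ⧸ radPow A A (l + 1), Function.Injective ι ∧
        ∀ a ∈ jacobsonRad A, (radPow A A (l + 1)).mkQ a ∈ LinearMap.range ι := by
  let p := (radPow A A (l + 1)).mkQ ∘ₗ (jacobsonRad A).subtype
  have hp : LinearMap.ker p = radPow A A l • ⊤ := by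
    ext x
    rw [Submodule.mem_smul_top_iff, ← radPow_succ_eq_smul, LinearMap.ker_comp, Submodule.ker_mkQ]
    rfl
  exact ⟨Submodule.liftQ _ p hp.ge,
    LinearMap.ker_eq_bot.1 (Submodule.ker_liftQ_eq_bot' _ _ hp.symm),
    fun a ha => ⟨Submodule.Quotient.mk ⟨a, ha⟩, rfl⟩⟩

lemma jacobson_smul_top_le_range_piMap {κ X : Type} [AddCommGroup X] [Module A X] {I : Ideal A}
    (g : X →ₗ[A] A ⧸ I) (hg : ∀ a ∈ jacobsonRad A, I.mkQ a ∈ LinearMap.range g) :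
    Ring.jacobson A • ⊤ ≤ LinearMap.range (LinearMap.piMap fun _ : κ => g) := by
  refine Submodule.smul_le.2 fun a ha x _ => ?_
  choose y hy using fun i => I.mkQ_surjective (x i)
  choose z hz using fun i => hg (a * y i) <| by
    rw [jacobsonRad_eq_jacobson]
    exact Ideal.mul_mem_right _ _ ha
  refine ⟨z, funext fun i => (hz i).trans ?_⟩
  rw [← smul_eq_mul, map_smul, hy, Pi.smul_apply]

lemma inAdd_ADRModule_succ_of_injective [IsSemisimpleRing (A ⧸ Ring.jacobson A)] {l n : ℕ}
    {N : Type} [AddCommGroup N] [Module A N]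
    (hJ : InAdd A (ADRModule A l)
      (↥(jacobsonRad A) ⧸ radPow A A l • (⊤ : Submodule A (jacobsonRad A))))
    (ih : AddClosedUnderSubmodules A (ADRModule A l))
    (f : N →ₗ[A] Fin n → ADRModule A (l + 1)) (hf : Function.Injective f) :
    InAdd A (ADRModule A (l + 1)) N := by
  let φ : N →ₗ[A] Fin n → A ⧸ radPow A A (l + 1) :=
    LinearMap.pi fun i => LinearMap.proj (Fin.last l) ∘ₗ LinearMap.proj i ∘ₗ f
  let ψ : N →ₗ[A] Fin n → ADRModule A l :=
    LinearMap.pi fun i => LinearMap.pi fun j =>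
      LinearMap.proj j.castSucc ∘ₗ LinearMap.proj i ∘ₗ f
  have eq_of_φ_of_ψ {x y : N} (h : φ x = φ y) (h' : ψ x = ψ y) : x = y := by
    refine hf (funext fun i => funext fun j => ?_)
    induction j using Fin.lastCases with
    | last => exact congrFun h i
    | cast j => exact congrFun (congrFun h' i) j
  obtain ⟨ι, hι, mem_range_ι⟩ := exists_injective_jacobsonRad_quotient A l
  let Ψ := LinearMap.piMap fun _ : Fin n => ι
  let R := LinearMap.range Ψ
  have inAdd_R : InAdd A (ADRModule A l) R :=
    (InAdd.pi fun _ => hJ).of_equiv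
      (LinearEquiv.ofInjective Ψ (Function.Injective.piMap fun _ => hι))
  have inAdd_comap : InAdd A (ADRModule A l) (R.comap φ) :=
    ih ((φ.submoduleComap R).prod (ψ ∘ₗ (R.comap φ).subtype))
      (fun x y h => Subtype.ext (eq_of_φ_of_ψ (congrArg Subtype.val (Prod.ext_iff.1 h).1)
        (Prod.ext_iff.1 h).2))
      (inAdd_R.prod (InAdd.pi fun _ => InAdd.self))
  have := isSemisimpleModule_quotient_of_jacobson_smul_le
    (jacobson_smul_top_le_range_piMap (κ := Fin n) ι mem_range_ι)
  obtain ⟨s, t, hts⟩ := exists_retract_prod_comap φ R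
    fun g hg => exists_comp_eq_of_range_le
      (fun a ha => radPow_smul_eq_zero_of_injective ha f hf) _ g hg
  have inAdd_succ : InAdd A (ADRModule A (l + 1)) (ADRModule A l) :=
    InAdd.pi fun j => inAdd_ADRModule_quotient (by omega)
  exact ((InAdd.pi fun _ => inAdd_ADRModule_quotient le_rfl).prod
    (inAdd_comap.trans inAdd_succ)).of_retract s t hts

lemma addClosedUnderSubmodules_ADRModule [IsSemisimpleRing (A ⧸ Ring.jacobson A)] {k : ℕ}
    (hJ : InAdd A (ADRModule A k) (jacobsonRad A)) (l : ℕ) :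
    AddClosedUnderSubmodules A (ADRModule A l) := by
  induction l with
  | zero =>
    intro N X _ _ _ _ f hf hX
    obtain ⟨n, s, t, hts⟩ := hX.exists_retract_pow
    have : Subsingleton N := ((LinearMap.injective_of_comp_eq_id s t hts).comp hf).subsingleton
    exact .of_subsingleton
  | succ l ih =>
    intro N X _ _ _ _ f hf hX
    obtain ⟨n, s, t, hts⟩ := hX.exists_retract_pow
    exact inAdd_ADRModule_succ_of_injective (hJ.ADRModule_quotient_radPow_smul l) ih (s ∘ₗ f)
      ((LinearMap.injective_of_comp_eq_id s t hts).comp hf)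

end SubmoduleClosure

section Semiprimary

variable {B : Type} [Ring B] {P V W : Type} [AddCommGroup P] [Module B P] [AddCommGroup V]
  [Module B V] [AddCommGroup W] [Module B W]

lemma range_pow_le_jacobson_pow_smul_top {n : Module.End B W}
    (hn : LinearMap.range n ≤ Ring.jacobson B • ⊤) (k : ℕ) :
    LinearMap.range (n ^ k) ≤ Ring.jacobson B ^ k • ⊤ := by
  induction k with
  | zero => simp [Submodule.pow_zero, Ideal.one_eq_top]
  | succ k ih =>
    calc LinearMap.range (n ^ (k + 1))
        = (LinearMap.range (n ^ k)).map n := by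
          rw [pow_succ', Module.End.mul_eq_comp, LinearMap.range_comp]
      _ ≤ (Ring.jacobson B ^ k • ⊤ : Submodule B W).map n := Submodule.map_mono ih
      _ = Ring.jacobson B ^ k • LinearMap.range n := by rw [Submodule.map_smul'', Submodule.map_top]
      _ ≤ Ring.jacobson B ^ k • Ring.jacobson B • ⊤ := Submodule.smul_mono le_rfl hn
      _ = Ring.jacobson B ^ (k + 1) • ⊤ := by rw [Submodule.pow_succ, Submodule.mul_smul]

variable [IsSemiprimaryRing B]

lemma isNilpotent_of_range_le_jacobson_smul_top {n : Module.End B W}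
    (hn : LinearMap.range n ≤ Ring.jacobson B • ⊤) : IsNilpotent n := by
  obtain ⟨k, hk⟩ := IsSemiprimaryRing.isNilpotent (R := B)
  refine ⟨k, LinearMap.range_eq_bot.1 (eq_bot_iff.2 ?_)⟩
  simpa [hk] using range_pow_le_jacobson_pow_smul_top hn k

lemma exists_retraction_of_inf_jacobson_smul_le [Module.Projective B P] (N : Submodule B P)
    (hN : N ⊓ Ring.jacobson B • ⊤ ≤ Ring.jacobson B • N) :
    ∃ r : P →ₗ[B] N, r ∘ₗ N.subtype = LinearMap.id := by
  set R : Submodule B P := Ring.jacobson B • ⊤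
  have : IsSemisimpleModule B (P ⧸ R) := isSemisimpleModule_quotient_of_jacobson_smul_le le_rfl
  obtain ⟨C, hC⟩ := exists_isCompl (N.map R.mkQ)
  obtain ⟨g, hg⟩ := Module.projective_lifting_property (R.mkQ.submoduleMap N)
    ((N.map R.mkQ).projectionOnto C hC ∘ₗ R.mkQ) (R.mkQ.submoduleMap_surjective N)
  have mkQ_g (x : N) : R.mkQ (g x) = R.mkQ x :=
    congrArg Subtype.val <| (LinearMap.congr_fun hg x).trans <|
      Submodule.projectionOnto_apply_left hC ⟨R.mkQ x, Submodule.mem_map_of_mem x.2⟩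
  have hnil : IsNilpotent (1 - g ∘ₗ N.subtype : Module.End B N) := by
    refine isNilpotent_of_range_le_jacobson_smul_top ?_
    rintro _ ⟨x, rfl⟩
    rw [Submodule.mem_smul_top_iff]
    refine hN ⟨Subtype.prop _, ?_⟩
    rw [SetLike.mem_coe, ← Submodule.ker_mkQ R, LinearMap.mem_ker]
    simpa [sub_eq_zero] using (mkQ_g x).symm
  obtain ⟨u, hu⟩ : IsUnit (g ∘ₗ N.subtype : Module.End B N) := by
    simpa only [sub_sub_cancel] using hnil.isUnit_one_sub
  refine ⟨(↑u⁻¹ : Module.End B N) ∘ₗ g, ?_⟩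
  rw [LinearMap.comp_assoc, ← hu]
  exact u.inv_mul

lemma projective_of_ker_inf_jacobson_smul_le [Module.Projective B P] (π : P →ₗ[B] V)
    (hπ : Function.Surjective π)
    (h : LinearMap.ker π ⊓ Ring.jacobson B • ⊤ ≤ Ring.jacobson B • LinearMap.ker π) :
    Module.Projective B V := by
  have hexact : Function.Exact (LinearMap.ker π).subtype π := π.exact_subtype_ker_map
  obtain ⟨σ, hσ⟩ := ((hexact.split_tfae (LinearMap.ker π).injective_subtype hπ).out 0 1).2
    (exists_retraction_of_inf_jacobson_smul_le _ h)
  exact Module.Projective.of_split σ π hσ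

-- A relation `∑ w v • v = 0` with coefficients in the radical holds in some projective `W ⊆ V`;
-- lifting `W → V` to `ρ : W → (V →₀ B)` gives `w = ∑ w v • (single v 1 - ρ v)`.
lemma projective_of_forall_finset
    (h : ∀ S : Finset V, ∃ (W : Type) (_ : AddCommGroup W) (_ : Module B W) (i : W →ₗ[B] V),
      Module.Projective B W ∧ Function.Injective i ∧ (S : Set V) ⊆ LinearMap.range i) :
    Module.Projective B V := by
  let π : (V →₀ B) →ₗ[B] V := Finsupp.linearCombination B id
  have hπ : Function.Surjective π := Finsupp.linearCombination_id_surjective B V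
  refine projective_of_ker_inf_jacobson_smul_le π hπ ?_
  rintro w ⟨hw, hwJ⟩
  obtain ⟨W, _, _, i, _, hi, hwi⟩ := h w.support
  obtain ⟨ρ, hρ⟩ := Module.projective_lifting_property π i hπ
  choose! y hy using fun v (hv : v ∈ w.support) => hwi hv
  have sum_y : ∑ v ∈ w.support, w v • y v = 0 := by
    refine hi ?_
    rw [map_zero, map_sum, ← LinearMap.mem_ker.1 hw, Finsupp.linearCombination_apply]
    exact Finset.sum_congr rfl fun v hv => by rw [map_smul, hy v hv]; rfl
  have hw_eq : w = ∑ v ∈ w.support, w v • (Finsupp.single v 1 - ρ (y v)) := by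
    simp only [smul_sub, Finset.sum_sub_distrib, ← map_smul, ← map_sum, sum_y, map_zero, sub_zero]
    simpa [Finsupp.sum] using w.sum_single.symm
  rw [hw_eq]
  refine Submodule.sum_mem _ fun v hv => Submodule.smul_mem_smul ?_ ?_
  · have hwv : w v ∈ Ring.jacobson B • (⊤ : Ideal B) :=
      Submodule.smul_top_le_comap_smul_top _ (Finsupp.lapply v) hwJ
    rwa [Ideal.smul_eq_mul, Ideal.mul_top] at hwv
  · rw [LinearMap.mem_ker, map_sub, ← LinearMap.comp_apply, hρ, hy v hv]
    simp [π]

lemma projective_ker_finsupp {ι : Type} (f : (ι →₀ B) →ₗ[B] V)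
    (h : ∀ (κ : Type) [Finite κ] (g : (κ → B) →ₗ[B] V), Module.Projective B (LinearMap.ker g)) :
    Module.Projective B (LinearMap.ker f) := by
  classical
  refine projective_of_forall_finset (V := LinearMap.ker f) fun S => ?_
  let κ : Set ι := S.biUnion fun w => w.1.support
  let e : Finsupp.supported B B κ ≃ₗ[B] κ → B :=
    Finsupp.supportedEquivFinsupp κ ≪≫ₗ Finsupp.linearEquivFunOnFinite B B κ
  let j : (κ → B) →ₗ[B] ι →₀ B := (Finsupp.supported B B κ).subtype ∘ₗ e.symm.toLinearMap
  have hj : Function.Injective j := Subtype.val_injective.comp e.symm.injective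
  refine ⟨LinearMap.ker (f ∘ₗ j), inferInstance, inferInstance, j.restrict fun _ => id,
    h κ _, fun x y hxy => Subtype.ext (hj ?_), fun w hw => ?_⟩
  · exact congrArg (fun z : LinearMap.ker f => z.1) hxy
  · have hwκ : w.1 ∈ Finsupp.supported B B κ := fun v hv =>
      Finset.mem_biUnion.2 ⟨w, hw, hv⟩
    have hjw : j (e ⟨w, hwκ⟩) = w := congrArg Subtype.val (e.symm_apply_apply ⟨w, hwκ⟩)
    exact ⟨⟨e ⟨w, hwκ⟩, (congrArg f hjw).trans w.2⟩, Subtype.ext hjw⟩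

lemma glDimLE2_of_projective_ker_pi
    (h : ∀ (κ Q : Type) [Finite κ] [AddCommGroup Q] [Module B Q] (_ : Module.Projective B Q)
      (g : (κ → B) →ₗ[B] Q), Module.Projective B (LinearMap.ker g)) : GlDimLE2 B := by
  intro P Q _ _ _ _ hP hQ f
  obtain ⟨s, hs⟩ := Module.projective_def'.1 hP
  let ε := Finsupp.linearCombination B (id : P → P)
  have hfε : Module.Projective B (LinearMap.ker (f ∘ₗ ε)) :=
    projective_ker_finsupp _ fun κ _ => h κ Q hQ
  refine Module.Projective.of_split (s.restrict fun x hx => ?_)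
    (ε.restrict (p := LinearMap.ker (f ∘ₗ ε)) fun _ => id) (LinearMap.ext fun x => Subtype.ext ?_)
  · exact (congrArg f (LinearMap.congr_fun hs x)).trans hx
  · exact LinearMap.congr_fun hs x

end Semiprimary

section HomFunctor

variable {A : Type} [Ring A] {M X Y : Type} [AddCommGroup M] [Module A M] [AddCommGroup X]
  [Module A X] [AddCommGroup Y] [Module A Y]

lemma InAdd.projective_hom (hX : InAdd A M X) :
    Module.Projective (Module.End A M) (X →ₗ[A] M) := by
  obtain ⟨n, s, t, hts⟩ := hX.exists_retract_pow
  have : Module.Projective (Module.End A M) ((Fin n → M) →ₗ[A] M) :=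
    .of_equiv (LinearMap.lsum A (fun _ : Fin n => M) (Module.End A M))
  refine .of_split (LinearMap.lcomp (Module.End A M) M t) (LinearMap.lcomp (Module.End A M) M s) ?_
  ext v x
  exact congrArg v (LinearMap.congr_fun hts x)

lemma InAdd.hom_ext (hY : InAdd A M Y) {f g : X →ₗ[A] Y} (h : ∀ u : Y →ₗ[A] M, u ∘ₗ f = u ∘ₗ g) :
    f = g := by
  obtain ⟨n, s, t, hts⟩ := hY.exists_retract_pow
  ext x
  refine LinearMap.injective_of_comp_eq_id s t hts (funext fun i => ?_)
  exact LinearMap.congr_fun (h (LinearMap.proj i ∘ₗ s)) x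

lemma InAdd.exists_eq_lcomp (hX : InAdd A M X)
    (c : (X →ₗ[A] M) →ₗ[Module.End A M] Y →ₗ[A] M) :
    ∃ y : Y →ₗ[A] X, c = LinearMap.lcomp (Module.End A M) M y := by
  obtain ⟨n, s, t, hts⟩ := hX.exists_retract_pow
  refine ⟨t ∘ₗ LinearMap.pi fun i => c (LinearMap.proj i ∘ₗ s), LinearMap.ext fun v => ?_⟩
  have sum_single (z : Fin n → M) : ∑ i, v (t (Pi.single i (z i))) = v (t z) := by
    simp only [← map_sum, Finset.univ_sum_single]
  have hv : v = ∑ i, ((v ∘ₗ t) ∘ₗ LinearMap.single A (fun _ => M) i : Module.End A M) •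
      (LinearMap.proj i ∘ₗ s : X →ₗ[A] M) := by
    refine LinearMap.ext fun x => ?_
    simpa using (congrArg v (LinearMap.congr_fun hts x)).symm.trans (sum_single (s x)).symm
  refine LinearMap.ext fun z => ?_
  conv_lhs => rw [hv]
  simp only [map_sum, map_smul, LinearMap.sum_apply]
  exact sum_single fun i => c (LinearMap.proj i ∘ₗ s) z

lemma mem_range_lcomp_iff {p : X →ₗ[A] Y} (hp : Function.Surjective p) (v : X →ₗ[A] M) :
    v ∈ LinearMap.range (LinearMap.lcomp (Module.End A M) M p) ↔
      LinearMap.ker p ≤ LinearMap.ker v := by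
  constructor
  · rintro ⟨u, rfl⟩
    exact LinearMap.ker_le_ker_comp p u
  · intro hv
    refine ⟨(LinearMap.ker p).liftQ v hv ∘ₗ (p.quotKerEquivOfSurjective hp).symm.toLinearMap, ?_⟩
    ext x
    rw [LinearMap.lcomp_apply, LinearMap.comp_apply, LinearEquiv.coe_coe,
      ← LinearMap.quotKerEquivOfSurjective_apply_mk p hp, LinearEquiv.symm_apply_apply]
    rfl

lemma projective_range_lcomp_iff {p : X →ₗ[A] Y} (hp : Function.Surjective p) :
    Module.Projective (Module.End A M) (LinearMap.range (LinearMap.lcomp (Module.End A M) M p)) ↔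
      Module.Projective (Module.End A M) (Y →ₗ[A] M) :=
  have e := LinearEquiv.ofInjective (LinearMap.lcomp (Module.End A M) M p)
    (LinearMap.lcomp_injective_of_surjective p hp)
  ⟨fun _ => .of_equiv e.symm, fun _ => .of_equiv e⟩

end HomFunctor

section GlobalDimensionTwo

variable {A : Type} [Ring A] {M X Y : Type} [AddCommGroup M] [Module A M] [AddCommGroup X]
  [Module A X] [AddCommGroup Y] [Module A Y]

lemma exists_injective_quotient_pi [IsArtinian A Y] (S : Set (Y →ₗ[A] M)) :
    ∃ (n : ℕ) (f : (Y ⧸ ⨅ v ∈ S, LinearMap.ker v) →ₗ[A] Fin n → M), Function.Injective f := by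
  obtain ⟨_, ⟨n, f, hfS, rfl⟩, hmin⟩ := IsArtinian.set_has_minimal
    {N | ∃ (n : ℕ) (f : Fin n → Y →ₗ[A] M), (∀ i, f i ∈ S) ∧ N = LinearMap.ker (LinearMap.pi f)}
    ⟨_, 0, finZeroElim, finZeroElim, rfl⟩
  have hker : LinearMap.ker (LinearMap.pi f) = ⨅ v ∈ S, LinearMap.ker v := by
    refine le_antisymm (le_iInf₂ fun v hv => ?_) ?_
    · have hcons : LinearMap.ker (LinearMap.pi (Fin.cons v f : Fin (n + 1) → Y →ₗ[A] M)) =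
          LinearMap.ker v ⊓ LinearMap.ker (LinearMap.pi f) := by
        ext x
        simp [funext_iff, Fin.forall_fin_succ]
      have hnot := hmin _ ⟨n + 1, Fin.cons v f, Fin.cases hv hfS, hcons.symm⟩
      exact inf_eq_right.1 (inf_le_right.eq_of_not_lt hnot)
    · rw [LinearMap.ker_pi]
      exact le_iInf fun i => iInf₂_le (f i) (hfS i)
  exact ⟨n, Submodule.liftQ _ (LinearMap.pi f) hker.ge,
    LinearMap.ker_eq_bot.1 (Submodule.ker_liftQ_eq_bot' _ _ hker.symm)⟩

lemma InAdd.exists_ker_eq_range_lcomp_mkQ (hX : InAdd A M X) {Q : Type} [AddCommGroup Q]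
    [Module (Module.End A M) Q] [Module.Projective (Module.End A M) Q]
    (g : (X →ₗ[A] M) →ₗ[Module.End A M] Q) :
    LinearMap.ker g = LinearMap.range (LinearMap.lcomp (Module.End A M) M
      (⨅ v ∈ (LinearMap.ker g : Set (X →ₗ[A] M)), LinearMap.ker v).mkQ) := by
  ext v
  rw [mem_range_lcomp_iff (Submodule.mkQ_surjective _), Submodule.ker_mkQ]
  refine ⟨fun hv => iInf₂_le v hv, fun hv => ?_⟩
  obtain ⟨s, hs⟩ := Module.projective_def'.1 ‹Module.Projective (Module.End A M) Q›
  refine LinearMap.injective_of_comp_eq_id s _ hs (Finsupp.ext fun q => LinearMap.ext fun z => ?_)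
  obtain ⟨y, hy⟩ := hX.exists_eq_lcomp (Finsupp.lapply q ∘ₗ s ∘ₗ g)
  have apply_y (w : X →ₗ[A] M) : s (g w) q z = w (y z) :=
    LinearMap.congr_fun (LinearMap.congr_fun hy w) z
  rw [apply_y, map_zero]
  refine hv ?_
  simp only [Submodule.mem_iInf]
  intro w hw
  rw [LinearMap.mem_ker, ← apply_y, LinearMap.mem_ker.1 hw, map_zero]
  rfl

lemma AddClosedUnderSubmodules.glDimLE2 [IsArtinian A M] [IsSemiprimaryRing (Module.End A M)]
    (hM : AddClosedUnderSubmodules A M) : GlDimLE2 (Module.End A M) := by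
  classical
  refine glDimLE2_of_projective_ker_pi fun κ Q _ _ _ _ g => ?_
  have := Fintype.ofFinite κ
  let e : (κ → Module.End A M) ≃ₗ[Module.End A M] ((κ → M) →ₗ[A] M) :=
    LinearMap.lsum A (fun _ : κ => M) (Module.End A M)
  let g' : ((κ → M) →ₗ[A] M) →ₗ[Module.End A M] Q := g ∘ₗ e.symm.toLinearMap
  obtain ⟨n, f, hf⟩ := exists_injective_quotient_pi (LinearMap.ker g' : Set ((κ → M) →ₗ[A] M))
  have : Module.Projective (Module.End A M) ((LinearMap.ker g).comap
      (e.symm : ((κ → M) →ₗ[A] M) →ₗ[Module.End A M] κ → Module.End A M)) := by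
    change Module.Projective (Module.End A M) (LinearMap.ker g')
    rw [InAdd.exists_ker_eq_range_lcomp_mkQ (.pi fun _ => .self) g',
      projective_range_lcomp_iff (Submodule.mkQ_surjective _)]
    exact (hM f hf (.pi fun _ => .self)).projective_hom
  exact .of_equiv (e.symm.ofSubmodule' (LinearMap.ker g))

end GlobalDimensionTwo

section Necessity

variable {A : Type} [Ring A] {M X Y : Type} [AddCommGroup M] [Module A M] [AddCommGroup X]
  [Module A X] [AddCommGroup Y] [Module A Y]

lemma exists_ker_lcomp_eq_range_lcomp [IsNoetherian A X] {p : X →ₗ[A] Y}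
    (hp : Function.Surjective p) :
    ∃ (n : ℕ) (h : (Fin n → A) →ₗ[A] X), LinearMap.ker (LinearMap.lcomp (Module.End A M) M h) =
      LinearMap.range (LinearMap.lcomp (Module.End A M) M p) := by
  obtain ⟨n, h, hh⟩ := Module.Finite.exists_fin' A (LinearMap.ker p)
  refine ⟨n, (LinearMap.ker p).subtype ∘ₗ h, ?_⟩
  ext v
  rw [mem_range_lcomp_iff hp, LinearMap.mem_ker, LinearMap.lcomp_apply',
    ← LinearMap.range_le_ker_iff, LinearMap.range_comp, LinearMap.range_eq_top.2 hh,
    Submodule.map_top, Submodule.range_subtype]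

lemma GlDimLE2.projective_hom (hB : GlDimLE2 (Module.End A M)) (hA : InAdd A M A)
    [IsNoetherianRing A] [Module.Finite A Y] : Module.Projective (Module.End A M) (Y →ₗ[A] M) := by
  obtain ⟨k, p, hp⟩ := Module.Finite.exists_fin' A Y
  obtain ⟨n, h, hh⟩ := exists_ker_lcomp_eq_range_lcomp (M := M) hp
  rw [← projective_range_lcomp_iff hp, ← hh]
  exact hB _ _ (InAdd.pi fun _ => hA).projective_hom (InAdd.pi fun _ => hA).projective_hom _

lemma GlDimLE1.exists_section (hB : GlDimLE1 (Module.End A M)) (hA : InAdd A M A)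
    [IsNoetherian A X] (hX : InAdd A M X) (hY : InAdd A M Y) {p : X →ₗ[A] Y}
    (hp : Function.Surjective p) : ∃ y : Y →ₗ[A] X, p ∘ₗ y = LinearMap.id := by
  obtain ⟨n, h, hh⟩ := exists_ker_lcomp_eq_range_lcomp (M := M) hp
  set h' := LinearMap.lcomp (Module.End A M) M h
  set p' := LinearMap.lcomp (Module.End A M) M p
  have := hB _ (InAdd.pi fun _ => hA).projective_hom (LinearMap.range h')
  obtain ⟨σ, hσ⟩ := Module.projective_lifting_property h'.rangeRestrict LinearMap.id
    h'.surjective_rangeRestrict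
  have hexact : Function.Exact p' h'.rangeRestrict := by
    rw [LinearMap.exact_iff, LinearMap.ker_rangeRestrict, hh]
  have split := (hexact.split_tfae
    (LinearMap.lcomp_injective_of_surjective p hp) h'.surjective_rangeRestrict).out 0 1
  obtain ⟨r, hr⟩ := split.1 ⟨σ, hσ⟩
  obtain ⟨y, rfl⟩ := hX.exists_eq_lcomp r
  exact ⟨y, hY.hom_ext fun u => LinearMap.congr_fun hr u⟩

lemma not_glDimLE1_of_le_jacobson [IsNoetherianRing A] (hA : InAdd A M A) {I : Ideal A}
    (hI : I ≤ Ring.jacobson A) (hI0 : I ≠ ⊥) (hAI : InAdd A M (A ⧸ I)) :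
    ¬ GlDimLE1 (Module.End A M) := by
  intro hB
  obtain ⟨y, hy⟩ := hB.exists_section hA hA hAI I.mkQ_surjective
  have mul_eq_zero {a : A} (ha : a ∈ I) : a * y (I.mkQ 1) = 0 := by
    rw [← smul_eq_mul, ← map_smul, ← map_smul, smul_eq_mul, mul_one, Submodule.mkQ_apply,
      (Submodule.Quotient.mk_eq_zero I).2 ha, map_zero]
  have one_sub_mem : 1 - y (I.mkQ 1) ∈ I := by
    rw [← Submodule.Quotient.mk_eq_zero, ← Submodule.mkQ_apply, map_sub, sub_eq_zero]
    exact (LinearMap.congr_fun hy (I.mkQ 1)).symm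
  refine hI0 (Submodule.FG.eq_bot_of_le_jacobson_smul (IsNoetherian.noetherian I) fun a ha => ?_)
  have ha_eq : a = a • (1 - y (I.mkQ 1)) := by
    rw [smul_eq_mul, mul_sub, mul_one, mul_eq_zero ha, sub_zero]
  rw [ha_eq]
  exact Submodule.smul_mem_smul (hI ha) one_sub_mem

lemma exists_apply_comp_subtype_eq (hX : InAdd A M X) {N : Submodule A X} (hXN : InAdd A M (X ⧸ N))
    (c : (N →ₗ[A] M) →ₗ[Module.End A M] Module.End A M) :
    ∃ y : M →ₗ[A] N, ∀ v : X →ₗ[A] M, c (v ∘ₗ N.subtype) = (v ∘ₗ N.subtype) ∘ₗ y := by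
  obtain ⟨y, hy⟩ :=
    hX.exists_eq_lcomp (c ∘ₗ LinearMap.lcomp (Module.End A M) M N.subtype)
  replace hy (v : X →ₗ[A] M) : c (v ∘ₗ N.subtype) = v ∘ₗ y := LinearMap.congr_fun hy v
  have mkQ_comp_y : N.mkQ ∘ₗ y = 0 := hXN.hom_ext fun u => by
    have hN : N.mkQ ∘ₗ N.subtype = 0 := by ext x; simp
    rw [← LinearMap.comp_assoc, ← hy, LinearMap.comp_assoc, hN, LinearMap.comp_zero,
      LinearMap.comp_zero, map_zero]
  refine ⟨y.codRestrict N fun z => ?_, hy⟩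
  rw [← N.ker_mkQ]
  exact LinearMap.congr_fun mkQ_comp_y z

lemma inAdd_of_projective_hom (hX : InAdd A M X) (N : Submodule A X) (hXN : InAdd A M (X ⧸ N))
    [Module.Projective (Module.End A M) (N →ₗ[A] M)] : InAdd A M N := by
  classical
  obtain ⟨n, s, t, hts⟩ := hX.exists_retract_pow
  obtain ⟨σ, hσ⟩ := Module.projective_def'.1 ‹Module.Projective (Module.End A M) (N →ₗ[A] M)›
  choose y hy using fun q : N →ₗ[A] M => exists_apply_comp_subtype_eq hX hXN (Finsupp.lapply q ∘ₗ σ)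
  let w (i : Fin n) : N →ₗ[A] M := LinearMap.proj i ∘ₗ s ∘ₗ N.subtype
  have σ_w (i : Fin n) (q : N →ₗ[A] M) : σ (w i) q = w i ∘ₗ y q :=
    hy q ((LinearMap.proj i : (Fin n → M) →ₗ[A] M) ∘ₗ s)
  let T := Finset.univ.biUnion fun i => (σ (w i)).support
  have w_eq (i : Fin n) : w i = ∑ q ∈ T, (w i ∘ₗ y q) ∘ₗ q := by
    have hsupp : (σ (w i)).support ⊆ T :=
      Finset.subset_biUnion_of_mem (fun i => (σ (w i)).support) (Finset.mem_univ i)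
    calc w i = (σ (w i)).sum fun q b => b • q := (LinearMap.congr_fun hσ (w i)).symm
      _ = ∑ q ∈ T, σ (w i) q • q :=
        Finsupp.sum_of_support_subset _ hsupp _ fun q _ => zero_smul _ q
      _ = ∑ q ∈ T, (w i ∘ₗ y q) ∘ₗ q := Finset.sum_congr rfl fun q _ => by rw [σ_w]; rfl
  have sum_y (x : N) : ∑ q ∈ T, y q (q x) = x := by
    refine Subtype.ext (LinearMap.injective_of_comp_eq_id s t hts (funext fun i => ?_))
    simpa [w] using (LinearMap.congr_fun (w_eq i) x).symm
  refine inAdd_of_retract_pow (κ := T) (LinearMap.pi fun q => q.1)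
    (LinearMap.lsum A _ ℕ fun q => y q) (LinearMap.ext fun x => ?_)
  simpa [Finset.sum_attach T fun q => y q (q x)] using sum_y x

end Necessity

section ArtinAlgebra

lemma finite_linearMap_of_isNoetherian (R : Type) [CommRing R] {A : Type} [Ring A] [Algebra R A]
    (X M : Type) [AddCommGroup X] [Module A X] [Module.Finite A X] [AddCommGroup M] [Module A M]
    [Module R M] [IsScalarTower R A M] [IsNoetherian R M] : Module.Finite R (X →ₗ[A] M) := by
  obtain ⟨n, x, hx⟩ := Module.Finite.exists_fin (R := A) (M := X)
  exact .of_injective (LinearMap.pi fun i => LinearMap.applyₗ' R (x i)) fun f g h =>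
    LinearMap.ext_on_range hx (congrFun h)

theorem stmt7_general (R : Type) [CommRing R] [IsArtinianRing R] (A : Type) [Ring A] [Algebra R A]
    [Module.Finite R A] (m : ℕ) (hm : 2 ≤ m) (hA : radPow A A m = ⊥)
    (hA' : radPow A A (m - 1) ≠ ⊥) :
    (GlDimLE2 (Module.End A (ADRModule A m)) ∧ ¬ GlDimLE1 (Module.End A (ADRModule A m)))
      ↔ InAdd A (ADRModule A m) ↥(jacobsonRad A) := by
  have : IsArtinianRing A := .of_finite R A
  have : Module.Finite R (Module.End A (ADRModule A m)) := finite_linearMap_of_isNoetherian R _ _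
  have : IsArtinianRing (Module.End A (ADRModule A m)) := .of_finite R _
  have inAdd_A : InAdd A (ADRModule A m) A :=
    (inAdd_ADRModule_quotient le_rfl).of_equiv (Submodule.quotEquivOfEqBot _ hA)
  constructor
  · rintro ⟨hB, -⟩
    have inAdd_quotient : InAdd A (ADRModule A m) (A ⧸ jacobsonRad A) :=
      radPow_one (A := A) ▸ inAdd_ADRModule_quotient (by omega)
    have := hB.projective_hom inAdd_A (Y := jacobsonRad A)
    exact inAdd_of_projective_hom inAdd_A _ inAdd_quotient
  · intro hJ
    have radPow_le : radPow A A (m - 1) ≤ Ring.jacobson A := by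
      rw [← jacobsonRad_eq_jacobson, ← radPow_one]
      exact radPow_antitone (by omega)
    exact ⟨(addClosedUnderSubmodules_ADRModule hJ m).glDimLE2,
      not_glDimLE1_of_le_jacobson inAdd_A radPow_le hA' (inAdd_ADRModule_quotient (by omega))⟩

end ArtinAlgebra

/-- for `A` of Loewy length `m ≥ 2` and `B = End_A(⊕_{j=1}^m A/J^j)` the ADR
algebra, `gl.dim B = 2` iff `J ∈ add(⊕_{j=1}^m A/J^j)`. -/
theorem stmt7 (K : Type) [Field K] (A : Type) [Ring A] [Algebra K A] [FiniteDimensional K A]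
    (m : ℕ) (hm : 2 ≤ m) (hA : radPow A A m = ⊥) (hA' : radPow A A (m - 1) ≠ ⊥) :
    (GlDimLE2 (Module.End A (ADRModule A m)) ∧ ¬ GlDimLE1 (Module.End A (ADRModule A m)))
      ↔ InAdd A (ADRModule A m) ↥(jacobsonRad A) :=
  stmt7_general K A m hm hA hA'
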